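/- arXiv:2403.00038 — 3 statements merged into one kernel-verified Lean document; each statement's English description precedes it below -/
import Mathlib

section
/- Let M : ℝ² → ℝ be a function satisfying (i) the switch symmetry with arbitrary constant: for every C > 0 and all a, b ∈ ℝ, M(a, b) = M(b/C, C·a); and (ii) the locality/decay condition: for every ε > 0 there exists R > 0 such that for all a, b with |a| ≥ R and |b| ≤ 1 one has |M(a, b)| < ε. Then M(a, b) = 0 for every (a, b) ≠ (0, 0). -/
/-!
If `b ≠ 0`, the switch with a small constant `C` moves `(a, b)` to `(b / C, C * a)`, whose first
coordinate is as large and whose second is as small as desired, so locality gives `|M (a, b)| < ε`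
for every `ε > 0`. A point `(a, 0)` with `a ≠ 0` is first switched to `(0, a)`.
-/

theorem kernel_eq_zero_of_snd_ne_zero (M : ℝ × ℝ → ℝ)
    (hswitch : ∀ C : ℝ, 0 < C → ∀ a b : ℝ, M (a, b) = M (b / C, C * a))
    (hlocal : ∀ ε : ℝ, 0 < ε → ∃ R : ℝ, 0 < R ∧
      ∀ a b : ℝ, R ≤ |a| → |b| ≤ 1 → |M (a, b)| < ε)
    (a b : ℝ) (hb : b ≠ 0) : M (a, b) = 0 := by
  by_contra hM
  obtain ⟨R, hR, hdecay⟩ := hlocal |M (a, b)| (abs_pos.mpr hM)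
  have hb' : 0 < |b| := abs_pos.mpr hb
  -- With `C = K⁻¹`: `K ≥ R / |b|` gives `|b / C| ≥ R`, and `K ≥ |a|` gives `|C * a| ≤ 1`.
  obtain ⟨K, hK⟩ : ∃ K, K = R / |b| + |a| := ⟨_, rfl⟩
  have hRb : 0 < R / |b| := div_pos hR hb'
  have hKpos : 0 < K := by rw [hK]; positivity
  have h_far : R ≤ |b / K⁻¹| := by
    rw [div_inv_eq_mul, abs_mul, abs_of_pos hKpos, ← div_le_iff₀' hb', hK]
    linarith [abs_nonneg a]
  have h_near : |K⁻¹ * a| ≤ 1 := by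
    rw [abs_mul, abs_inv, abs_of_pos hKpos, inv_mul_le_iff₀ hKpos, hK]
    linarith
  have hlt := hdecay _ _ h_far h_near
  rw [← hswitch K⁻¹ (inv_pos.mpr hKpos) a b] at hlt
  exact lt_irrefl _ hlt

/-- Core of the paper's Theorem 1 (Generalised inner product): a kernel `M` on
phase-space displacements satisfying the switch symmetry `M(a,b) = M(b/C, C·a)`
for every positive constant `C`, together with the locality/decay condition,
vanishes everywhere except possibly at the origin. -/
theorem stmt_0 (M : ℝ × ℝ → ℝ)
    (hswitch : ∀ C : ℝ, 0 < C → ∀ a b : ℝ, M (a, b) = M (b / C, C * a))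
    (hlocal : ∀ ε : ℝ, 0 < ε → ∃ R : ℝ, 0 < R ∧
      ∀ a b : ℝ, R ≤ |a| → |b| ≤ 1 → |M (a, b)| < ε) :
    ∀ a b : ℝ, (a, b) ≠ (0, 0) → M (a, b) = 0 := by
  intro a b hab
  by_cases hb : b = 0
  · have ha : a ≠ 0 := by
      rintro rfl
      exact hab (by rw [hb])
    rw [hswitch 1 one_pos a b, one_mul]
    exact kernel_eq_zero_of_snd_ne_zero M hswitch hlocal _ a ha
  · exact kernel_eq_zero_of_snd_ne_zero M hswitch hlocal a b hb
end

section
/- Let M : ℝ² × ℝ² → ℝ be continuous and bounded. Suppose that for all a, b ∈ ℝ and all continuous compactly supported f₁, f₂ : ℝ² → ℝ, ∫ M(q,p,Δq,Δp) f₁(q,p) f₂(q+Δq, p+Δp) dq dp dΔq dΔp = ∫ M(q,p,Δq,Δp) f₁(q+a, p+b) f₂(q+a+Δq, p+b+Δp) dq dp dΔq dΔp. Then M(q,p,Δq,Δp) = M(q−a, p−b, Δq, Δp) for all arguments; in particular M(q,p,Δq,Δp) = M(0,0,Δq,Δp), i.e. M depends only on the relative displacement (Δq, Δp). -/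
open MeasureTheory

/-!
Substituting `w.1 ↦ w.1 - c` in the translated integral turns the hypothesis into
`∫ (M (x, y) - M (x - c, y)) f₁ x f₂ (x + y) = 0` for all test functions. If the continuous factor
`M (x, y) - M (x - c, y)` were positive at `(x₀, y₀)`, tent functions `f₁` around `x₀` and `f₂`
around `x₀ + y₀` of small radius would make the integrand nonnegative and positive at `(x₀, y₀)`,
so the integral would be positive. Hence `M (x, y) ≤ M (x - c, y)` for all `x`, `y`, `c`; replacing
`(x, c)` by `(x - c, -c)` gives the reverse inequality.
-/

/-- The tent function of radius `r` around `c`. -/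
noncomputable def tent (c : ℝ × ℝ) (r : ℝ) (x : ℝ × ℝ) : ℝ := max 0 (r - dist x c)

lemma tent_continuous (c : ℝ × ℝ) (r : ℝ) : Continuous (tent c r) := by
  unfold tent; fun_prop

lemma tent_nonneg (c : ℝ × ℝ) (r : ℝ) (x : ℝ × ℝ) : 0 ≤ tent c r x := le_max_left _ _

lemma tent_self_pos (c : ℝ × ℝ) {r : ℝ} (hr : 0 < r) : 0 < tent c r c := by
  simp [tent, hr]

lemma dist_lt_of_tent_ne_zero {c x : ℝ × ℝ} {r : ℝ} (h : tent c r x ≠ 0) : dist x c < r := by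
  by_contra! hx
  exact h (max_eq_left (by linarith))

lemma tent_hasCompactSupport (c : ℝ × ℝ) (r : ℝ) : HasCompactSupport (tent c r) := by
  refine HasCompactSupport.intro (isCompact_closedBall c r) fun x hx => ?_
  by_contra h
  exact hx (Metric.mem_closedBall.2 (dist_lt_of_tent_ne_zero h).le)

/-- The two tents localise `(x, y)` near `(x₀, y₀)`: `y = (x + y) - x` is controlled by the two
radii together. -/
lemma dist_lt_of_tents_ne_zero {w w₀ : (ℝ × ℝ) × (ℝ × ℝ)} {r : ℝ}
    (h₁ : tent w₀.1 r w.1 ≠ 0) (h₂ : tent (w₀.1 + w₀.2) r (w.1 + w.2) ≠ 0) :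
    dist w w₀ < 2 * r := by
  have d₁ := dist_lt_of_tent_ne_zero h₁
  have d₂ := dist_lt_of_tent_ne_zero h₂
  have hr : 0 < r := dist_nonneg.trans_lt d₁
  rw [Prod.dist_eq]
  refine max_lt (by linarith) ?_
  have e : w.2 - w₀.2 = ((w.1 + w.2) - (w₀.1 + w₀.2)) - (w.1 - w₀.1) := by abel
  rw [dist_eq_norm] at d₁ d₂ ⊢
  rw [e]
  linarith [norm_sub_le ((w.1 + w.2) - (w₀.1 + w₀.2)) (w.1 - w₀.1)]

lemma kernel_tents_hasCompactSupport (N : (ℝ × ℝ) × (ℝ × ℝ) → ℝ) (w₀ : (ℝ × ℝ) × (ℝ × ℝ)) (r : ℝ) :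
    HasCompactSupport fun w : (ℝ × ℝ) × (ℝ × ℝ) =>
      N w * tent w₀.1 r w.1 * tent (w₀.1 + w₀.2) r (w.1 + w.2) := by
  refine HasCompactSupport.intro (isCompact_closedBall w₀ (2 * r)) fun w hw => ?_
  by_contra h
  simp only [mul_eq_zero, not_or] at h
  exact hw (Metric.mem_closedBall.2 (dist_lt_of_tents_ne_zero h.1.2 h.2).le)

lemma kernel_tents_continuous {N : (ℝ × ℝ) × (ℝ × ℝ) → ℝ} (hN : Continuous N)
    (w₀ : (ℝ × ℝ) × (ℝ × ℝ)) (r : ℝ) :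
    Continuous fun w : (ℝ × ℝ) × (ℝ × ℝ) =>
      N w * tent w₀.1 r w.1 * tent (w₀.1 + w₀.2) r (w.1 + w.2) :=
  (hN.mul ((tent_continuous _ _).comp continuous_fst)).mul
    ((tent_continuous _ _).comp (continuous_fst.add continuous_snd))

/-- One-sided form of the fundamental lemma, for test functions of the form
`f₁ x * f₂ (x + y)`. -/
lemma kernel_nonpos {D : (ℝ × ℝ) × (ℝ × ℝ) → ℝ} (hD : Continuous D)
    (h : ∀ (w₀ : (ℝ × ℝ) × (ℝ × ℝ)) (r : ℝ), ∫ w : (ℝ × ℝ) × (ℝ × ℝ),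
      D w * tent w₀.1 r w.1 * tent (w₀.1 + w₀.2) r (w.1 + w.2) = 0)
    (w₀ : (ℝ × ℝ) × (ℝ × ℝ)) : D w₀ ≤ 0 := by
  by_contra! hpos
  obtain ⟨ε, hε, hball⟩ := Metric.eventually_nhds_iff.1 (hD.continuousAt.eventually_const_lt hpos)
  have hr : 0 < ε / 2 := by linarith
  refine (Continuous.integral_pos_of_hasCompactSupport_nonneg_nonzero (x := w₀)
    (kernel_tents_continuous hD w₀ (ε / 2)) (kernel_tents_hasCompactSupport D w₀ (ε / 2))
    (fun w => ?_) ?_).ne' (h w₀ (ε / 2))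
  · by_cases h₁ : tent w₀.1 (ε / 2) w.1 = 0
    · simp [h₁]
    by_cases h₂ : tent (w₀.1 + w₀.2) (ε / 2) (w.1 + w.2) = 0
    · simp [h₂]
    have hw : dist w w₀ < ε := by linarith [dist_lt_of_tents_ne_zero h₁ h₂]
    exact mul_nonneg (mul_nonneg (hball hw).le (tent_nonneg _ _ _)) (tent_nonneg _ _ _)
  · exact (mul_pos (mul_pos hpos (tent_self_pos _ hr)) (tent_self_pos _ hr)).ne'


/-- Translation-invariance step of the paper's Theorem 1 (Generalised inner product):
if the bilinear form `∫ M(q,p,Δq,Δp) f₁(q,p) f₂(q+Δq,p+Δp)` is invariant under a common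
translation of both test functions, then the kernel `M` is translation invariant in its
first pair of arguments, hence depends only on the displacement `(Δq,Δp)`. -/
theorem stmt_1 (M : (ℝ × ℝ) × (ℝ × ℝ) → ℝ)
    (hcont : Continuous M) (hbdd : ∃ C : ℝ, ∀ w, |M w| ≤ C)
    (hinv : ∀ a b : ℝ, ∀ f₁ f₂ : ℝ × ℝ → ℝ,
      Continuous f₁ → HasCompactSupport f₁ → Continuous f₂ → HasCompactSupport f₂ →
      (∫ w : (ℝ × ℝ) × (ℝ × ℝ),
          M w * f₁ w.1 * f₂ (w.1.1 + w.2.1, w.1.2 + w.2.2))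
        = ∫ w : (ℝ × ℝ) × (ℝ × ℝ),
            M w * f₁ (w.1.1 + a, w.1.2 + b) * f₂ (w.1.1 + a + w.2.1, w.1.2 + b + w.2.2)) :
    (∀ q p a b Δq Δp : ℝ, M ((q, p), (Δq, Δp)) = M ((q - a, p - b), (Δq, Δp))) ∧
    (∀ q p Δq Δp : ℝ, M ((q, p), (Δq, Δp)) = M ((0, 0), (Δq, Δp))) := by
  have key : ∀ (c : ℝ × ℝ) (w₀ : (ℝ × ℝ) × (ℝ × ℝ)), M w₀ ≤ M (w₀ - (c, 0)) := by
    intro c w₀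
    have hshift : Continuous fun w => M (w - (c, 0)) := by fun_prop
    have hD : Continuous fun w => M w - M (w - (c, 0)) := hcont.sub hshift
    refine sub_nonpos.1 (kernel_nonpos hD (fun w₁ r => ?_) w₀)
    simp only [sub_mul]
    rw [integral_sub (μ := volume)
      ((kernel_tents_continuous hcont w₁ r).integrable_of_hasCompactSupport
        (kernel_tents_hasCompactSupport _ w₁ r))
      ((kernel_tents_continuous hshift w₁ r).integrable_of_hasCompactSupport
        (kernel_tents_hasCompactSupport _ w₁ r)), sub_eq_zero]
    refine (hinv c.1 c.2 _ _ (tent_continuous w₁.1 r) (tent_hasCompactSupport _ _)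
      (tent_continuous (w₁.1 + w₁.2) r) (tent_hasCompactSupport _ _)).trans ?_
    have : (volume : Measure (ℝ × ℝ)).IsAddHaarMeasure :=
      Measure.prod.instIsAddHaarMeasure volume volume
    have : (volume : Measure ((ℝ × ℝ) × (ℝ × ℝ))).IsAddHaarMeasure :=
      Measure.prod.instIsAddHaarMeasure volume volume
    refine Eq.trans ?_ (integral_add_right_eq_self _ ((c, 0) : (ℝ × ℝ) × (ℝ × ℝ)))
    refine integral_congr_ae (Filter.Eventually.of_forall fun w => ?_)
    simp only [add_sub_cancel_right, Prod.fst_add, Prod.snd_add, add_zero]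
    rfl
  have main : ∀ q p a b Δq Δp : ℝ, M ((q, p), (Δq, Δp)) = M ((q - a, p - b), (Δq, Δp)) := by
    intro q p a b Δq Δp
    apply le_antisymm
    · simpa using key (a, b) ((q, p), (Δq, Δp))
    · simpa using key (-a, -b) ((q - a, p - b), (Δq, Δp))
  exact ⟨main, fun q p Δq Δp => by simpa using main q p q p Δq Δp⟩
end

section
/- Let J : ℝ⁴ → ℝ be continuous and bounded. Suppose that for all continuous compactly supported f₁, f₂ : ℝ² → ℝ, ∫ [ f₁(q+l, p+j) J(q,p,l,j) f₂(q,p) + f₂(q+l, p+j) J(q,p,l,j) f₁(q,p) ] dq dp dl dj = 0. Then J(q, p, l, j) = −J(q+l, p+j, −l, −j) for all (q, p, l, j) ∈ ℝ⁴. -/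
/-!
Write `x = (q, p)`, `d = (l, j)` and let `σ (x, d) = (x + d, -d)`, a measure-preserving involution
of `ℝ² × ℝ²`. Applying `σ` to the second summand of the invariance identity turns the identity into
`∫ f₁(x + d) f₂(x) G(x, d) = 0` with `G = J + J ∘ σ` continuous (`integral_symm_eq_zero`).
If `G` were nonzero at some `w₀ = (x₀, d₀)`, take `f₁` a small tent at `x₀ + d₀` and `f₂` equal to
`G w₀` times a small tent at `x₀`: the integrand is then continuous, compactly supported,
nonnegative, and positive at `w₀`, so its integral is positive, a contradiction. Hence `G = 0`,
which is the claimed antisymmetry.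
-/

open MeasureTheory

lemma tent_eq_zero {c : ℝ × ℝ} {r : ℝ} {x : ℝ × ℝ} (h : r ≤ dist x c) : tent c r x = 0 :=
  max_eq_left (by linarith)

lemma tent_self {c : ℝ × ℝ} {r : ℝ} (hr : 0 < r) : tent c r c = r := by
  simp [tent, hr.le]

/-- The involution `(x, d) ↦ (x + d, -d)`: in terms of the pair of endpoints `(x, x + d)` it
exchanges the two points. -/
def flipHomeo : ((ℝ × ℝ) × (ℝ × ℝ)) ≃ₜ ((ℝ × ℝ) × (ℝ × ℝ)) where
  toFun w := (w.1 + w.2, -w.2)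
  invFun w := (w.1 + w.2, -w.2)
  left_inv w := by simp
  right_inv w := by simp
  continuous_toFun := by fun_prop
  continuous_invFun := by fun_prop

lemma flipHomeo_apply (w : (ℝ × ℝ) × (ℝ × ℝ)) : flipHomeo w = (w.1 + w.2, -w.2) := rfl

lemma flipHomeo_measurePreserving : MeasurePreserving flipHomeo volume volume :=
  (measurePreserving_add_prod_neg (volume : Measure (ℝ × ℝ)) (volume : Measure (ℝ × ℝ))).comp
    Measure.measurePreserving_swap

lemma hasCompactSupport_pair {f₁ f₂ : ℝ × ℝ → ℝ} (k₁ : HasCompactSupport f₁)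
    (k₂ : HasCompactSupport f₂) (H : (ℝ × ℝ) × (ℝ × ℝ) → ℝ) :
    HasCompactSupport fun w : (ℝ × ℝ) × (ℝ × ℝ) => f₁ (w.1 + w.2) * f₂ w.1 * H w := by
  -- If `x ∈ tsupport f₂` and `x + d ∈ tsupport f₁`, then `d` lies in the difference set.
  have hc : IsCompact ((fun z : (ℝ × ℝ) × (ℝ × ℝ) => (z.1, z.2 - z.1)) ''
      (tsupport f₂ ×ˢ tsupport f₁)) :=
    (IsCompact.prod k₂ k₁).image (by fun_prop)
  refine HasCompactSupport.intro hc fun w hw => ?_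
  by_cases h2 : w.1 ∈ tsupport f₂
  · have h1 : w.1 + w.2 ∉ tsupport f₁ := fun h1 =>
      hw ⟨(w.1, w.1 + w.2), ⟨h2, h1⟩, by simp⟩
    simp [image_eq_zero_of_notMem_tsupport h1]
  · simp [image_eq_zero_of_notMem_tsupport h2]

/-- The invariance identity for one pair of test functions, with the second summand transported
by the flip, so that both summands carry the same factor `f₁ (x + d) * f₂ x`. -/
lemma integral_symm_eq_zero {J : (ℝ × ℝ) × (ℝ × ℝ) → ℝ} (hcont : Continuous J)
    {f₁ f₂ : ℝ × ℝ → ℝ} (c₁ : Continuous f₁) (k₁ : HasCompactSupport f₁)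
    (c₂ : Continuous f₂) (k₂ : HasCompactSupport f₂)
    (h : ∫ w : (ℝ × ℝ) × (ℝ × ℝ),
      (f₁ (w.1 + w.2) * J w * f₂ w.1 + f₂ (w.1 + w.2) * J w * f₁ w.1) = 0) :
    ∫ w : (ℝ × ℝ) × (ℝ × ℝ), f₁ (w.1 + w.2) * f₂ w.1 * (J w + J (flipHomeo w)) = 0 := by
  have hJf : Continuous fun w => J (flipHomeo w) := hcont.comp flipHomeo.continuous
  have i₁ : Integrable fun w : (ℝ × ℝ) × (ℝ × ℝ) => f₁ (w.1 + w.2) * f₂ w.1 * J w :=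
    Continuous.integrable_of_hasCompactSupport (by fun_prop) (hasCompactSupport_pair k₁ k₂ J)
  have i₂ : Integrable fun w : (ℝ × ℝ) × (ℝ × ℝ) => f₂ (w.1 + w.2) * f₁ w.1 * J w :=
    Continuous.integrable_of_hasCompactSupport (by fun_prop) (hasCompactSupport_pair k₂ k₁ J)
  have i₃ : Integrable fun w : (ℝ × ℝ) × (ℝ × ℝ) =>
      f₁ (w.1 + w.2) * f₂ w.1 * J (flipHomeo w) :=
    Continuous.integrable_of_hasCompactSupport (by fun_prop) (hasCompactSupport_pair k₁ k₂ _)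
  have hflip : ∫ w : (ℝ × ℝ) × (ℝ × ℝ), f₁ (w.1 + w.2) * f₂ w.1 * J (flipHomeo w) =
      ∫ w : (ℝ × ℝ) × (ℝ × ℝ), f₂ (w.1 + w.2) * f₁ w.1 * J w := by
    rw [← flipHomeo_measurePreserving.integral_comp flipHomeo.measurableEmbedding]
    refine integral_congr_ae (.of_forall fun w => ?_)
    simp only [flipHomeo_apply, add_neg_cancel_right, neg_neg, Prod.mk.eta]
    ring
  simp only [mul_add]
  rw [integral_add i₁ i₃, hflip, ← integral_add i₁ i₂, ← h]
  refine integral_congr_ae (.of_forall fun w => ?_)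
  simp only
  ring

/-- The paper's Lemma "Requirement from inner product invariance": if the non-localized
generator `J` makes `d/dt ∫ f₁ f₂ = 0` for all test states `f₁, f₂` (expressed as the
integral identity below), then `J(q,p,l,j) = −J(q+l,p+j,−l,−j)`. -/
theorem stmt_8 (J : (ℝ × ℝ) × (ℝ × ℝ) → ℝ)
    (hcont : Continuous J) (hbdd : ∃ C : ℝ, ∀ w, |J w| ≤ C)
    (hinv : ∀ f₁ f₂ : ℝ × ℝ → ℝ,
      Continuous f₁ → HasCompactSupport f₁ → Continuous f₂ → HasCompactSupport f₂ →
      (∫ w : (ℝ × ℝ) × (ℝ × ℝ),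
          (f₁ (w.1.1 + w.2.1, w.1.2 + w.2.2) * J w * f₂ w.1
            + f₂ (w.1.1 + w.2.1, w.1.2 + w.2.2) * J w * f₁ w.1)) = 0) :
    ∀ q p l j : ℝ, J ((q, p), (l, j)) = -J ((q + l, p + j), (-l, -j)) := by
  intro q p l j
  set w₀ : (ℝ × ℝ) × (ℝ × ℝ) := ((q, p), (l, j)) with hw₀
  set G : (ℝ × ℝ) × (ℝ × ℝ) → ℝ := fun w => J w + J (flipHomeo w) with hG
  have hGc : Continuous G := hcont.add (hcont.comp flipHomeo.continuous)
  suffices hG0 : G w₀ = 0 from eq_neg_of_add_eq_zero_left hG0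
  by_contra hne
  have hopen : IsOpen {w | 0 < G w₀ * G w} := isOpen_lt continuous_const (hGc.const_mul _)
  obtain ⟨δ, hδ, hball⟩ := Metric.isOpen_iff.1 hopen w₀ (mul_self_pos.2 hne)
  -- Radius `δ / 2` suffices: `d = (x + d) - x`, so the two tents confine `d` to radius `δ`.
  have hr : 0 < δ / 2 := by positivity
  let f₁ : ℝ × ℝ → ℝ := tent (w₀.1 + w₀.2) (δ / 2)
  let f₂ : ℝ × ℝ → ℝ := fun x => G w₀ * tent w₀.1 (δ / 2) x
  have c₁ : Continuous f₁ := tent_continuous _ _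
  have k₁ : HasCompactSupport f₁ := tent_hasCompactSupport _ _
  have c₂ : Continuous f₂ := (tent_continuous _ _).const_mul _
  have k₂ : HasCompactSupport f₂ := (tent_hasCompactSupport _ _).mul_left
  have hzero : ∫ w : (ℝ × ℝ) × (ℝ × ℝ), f₁ (w.1 + w.2) * f₂ w.1 * G w = 0 :=
    integral_symm_eq_zero hcont c₁ k₁ c₂ k₂ (hinv f₁ f₂ c₁ k₁ c₂ k₂)
  have hpos : 0 < ∫ w : (ℝ × ℝ) × (ℝ × ℝ), f₁ (w.1 + w.2) * f₂ w.1 * G w := by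
    refine Continuous.integral_pos_of_hasCompactSupport_nonneg_nonzero (x := w₀) (by fun_prop)
      (hasCompactSupport_pair k₁ k₂ G) (fun w => ?_) ?_
    · change 0 ≤ tent (w₀.1 + w₀.2) (δ / 2) (w.1 + w.2) * (G w₀ * tent w₀.1 (δ / 2) w.1) * G w
      rcases le_or_gt (δ / 2) (dist (w.1 + w.2) (w₀.1 + w₀.2)) with h1 | h1
      · simp [tent_eq_zero h1]
      rcases le_or_gt (δ / 2) (dist w.1 w₀.1) with h2 | h2
      · simp [tent_eq_zero h2]
      have h3 : dist w.2 w₀.2 < δ := by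
        have : w.2 - w₀.2 = ((w.1 + w.2) - (w₀.1 + w₀.2)) - (w.1 - w₀.1) := by abel
        rw [dist_eq_norm] at h1 h2 ⊢
        rw [this]
        exact (norm_sub_le _ _).trans_lt (by linarith)
      have hw : w ∈ Metric.ball w₀ δ := by
        rw [Metric.mem_ball, Prod.dist_eq]
        exact max_lt (by linarith) h3
      have hGG : 0 < G w₀ * G w := hball hw
      have := mul_nonneg (mul_nonneg (tent_nonneg (w₀.1 + w₀.2) (δ / 2) (w.1 + w.2))
        (tent_nonneg w₀.1 (δ / 2) w.1)) hGG.le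
      linarith
    · change tent (w₀.1 + w₀.2) (δ / 2) (w₀.1 + w₀.2) * (G w₀ * tent w₀.1 (δ / 2) w₀.1) * G w₀ ≠ 0
      rw [tent_self hr, tent_self hr]
      exact mul_ne_zero (mul_ne_zero hr.ne' (mul_ne_zero hne hr.ne')) hne
  exact hpos.ne' hzero
end
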